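/- Let (X, 𝒜, ν, T) be a non-singular dynamical system on a σ-finite measure space. If every set in the tail σ-algebra 𝒯 of positive ν-measure is asymptotically intersecting, then every A ∈ 𝒜 with ν(A) > 0 is asymptotically intersecting. -/

import Mathlib

open MeasureTheory Set Filter

/-- `A` belongs to the tail σ-algebra `𝒯 = ⋂ₙ T⁻ⁿ 𝒜`: for every `n`, `A` is the
`n`-fold preimage of some measurable set. -/
def IsTailSet {X : Type*} [MeasurableSpace X] (T : X → X) (A : Set X) : Prop :=
  ∀ n : ℕ, ∃ B : Set X, MeasurableSet B ∧ A = T^[n] ⁻¹' B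

/-- `A` belongs to the invariant σ-algebra `ℐ`: `A` is measurable and
`T⁻¹ A = A` mod `ν`. -/
def IsInvModNu {X : Type*} [MeasurableSpace X] (ν : Measure X) (T : X → X)
    (A : Set X) : Prop :=
  MeasurableSet A ∧ ν (symmDiff (T ⁻¹' A) A) = 0

/-!
Saturate `A` to the tail set `S = ⋃ₘ T⁻ᵐ Tᵐ A ⊇ A`, which by hypothesis is asymptotically
intersecting. Each `Tⁿ S` lies in the saturation of `Tⁿ A`, and the unions defining saturations are
increasing, so `Tⁿ⁺¹ S ∩ Tⁿ S` is covered by the sets `T⁻ᵐ (Tᵐ⁺ⁿ⁺¹ A ∩ Tᵐ⁺ⁿ A)`. If the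
intersection has positive measure, so does one of these sets, and for that `m` non-singularity gives
`ν (Tᵐ⁺ⁿ⁺¹ A ∩ Tᵐ⁺ⁿ A) > 0`.
-/

section TailSaturation

variable {X : Type*} (T : X → X) (A B : Set X)

/-- The saturation of `A` under the tail equivalence relation, in which `x ∼ a` when
`T^[m] x = T^[m] a` for some `m`; in set notation, `⋃ₘ T⁻ᵐ Tᵐ A`. -/
def tailSaturation : Set X :=
  ⋃ m : ℕ, T^[m] ⁻¹' (T^[m] '' A)

theorem monotone_preimage_image_iterate :
    Monotone fun m : ℕ ↦ T^[m] ⁻¹' (T^[m] '' A) := by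
  refine monotone_nat_of_le_succ fun m ↦ ?_
  rintro x ⟨a, ha, hax⟩
  exact ⟨a, ha, by simp only [Function.iterate_succ_apply', hax]⟩

theorem subset_tailSaturation : A ⊆ tailSaturation T A :=
  subset_iUnion_of_subset 0 (subset_preimage_image _ A)

theorem image_iterate_image_iterate (m n : ℕ) :
    T^[m] '' (T^[n] '' A) = T^[m + n] '' A := by
  rw [← image_comp, ← Function.iterate_add]

theorem preimage_iterate_tailSaturation (n : ℕ) :
    T^[n] ⁻¹' tailSaturation T (T^[n] '' A) = tailSaturation T A := by
  calc T^[n] ⁻¹' tailSaturation T (T^[n] '' A)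
      = ⋃ m : ℕ, T^[m + n] ⁻¹' (T^[m + n] '' A) := by
        simp only [tailSaturation, preimage_iUnion, image_iterate_image_iterate, ← preimage_comp,
          ← Function.iterate_add]
    _ = tailSaturation T A := (monotone_preimage_image_iterate T A).iSup_nat_add n

theorem image_iterate_tailSaturation_subset (n : ℕ) :
    T^[n] '' tailSaturation T A ⊆ tailSaturation T (T^[n] '' A) :=
  image_subset_iff.2 (preimage_iterate_tailSaturation T A n).ge

theorem tailSaturation_inter_tailSaturation :
    tailSaturation T A ∩ tailSaturation T B =
      ⋃ m : ℕ, T^[m] ⁻¹' (T^[m] '' A ∩ T^[m] '' B) :=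
  (iUnion_inter_of_monotone (monotone_preimage_image_iterate T A)
    (monotone_preimage_image_iterate T B)).symm

variable [MeasurableSpace X] {T A}

theorem measurableSet_image_iterate
    (hT : ∀ B : Set X, MeasurableSet B → MeasurableSet (T '' B)) (hA : MeasurableSet A) (n : ℕ) :
    MeasurableSet (T^[n] '' A) := by
  induction n with
  | zero => simpa using hA
  | succ n ih => simpa only [Function.iterate_succ', image_comp] using hT _ ih

theorem measurableSet_tailSaturation (hT : Measurable T)
    (hA : ∀ n : ℕ, MeasurableSet (T^[n] '' A)) : MeasurableSet (tailSaturation T A) :=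
  .iUnion fun m ↦ hT.iterate m (hA m)

theorem isTailSet_tailSaturation (hT : Measurable T)
    (hA : ∀ n : ℕ, MeasurableSet (T^[n] '' A)) : IsTailSet T (tailSaturation T A) := by
  refine fun n ↦ ⟨tailSaturation T (T^[n] '' A), measurableSet_tailSaturation hT fun m ↦ ?_,
    (preimage_iterate_tailSaturation T A n).symm⟩
  simpa only [image_iterate_image_iterate] using hA (m + n)

end TailSaturation

section AsymptoticallyIntersecting

variable {X : Type*} [MeasurableSpace X] {ν : Measure X} {T : X → X}

/-- `A` is asymptotically intersecting: two consecutive forward images of `A` meet in a set of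
positive (outer) measure. The condition `0 < ν A` is not part of the definition. -/
def AsymptoticallyIntersecting (ν : Measure X) (T : X → X) (A : Set X) : Prop :=
  ∃ n : ℕ, 0 < ν (T^[n + 1] '' A ∩ T^[n] '' A)

theorem exists_measure_image_inter_pos_of_tailSaturation
    (hT : Measure.QuasiMeasurePreserving T ν ν) {A B : Set X}
    (h : 0 < ν (tailSaturation T A ∩ tailSaturation T B)) :
    ∃ m : ℕ, 0 < ν (T^[m] '' A ∩ T^[m] '' B) := by
  contrapose! h
  simp only [nonpos_iff_eq_zero] at h ⊢
  rw [tailSaturation_inter_tailSaturation]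
  exact measure_iUnion_null fun m ↦ (hT.iterate m).preimage_null (h m)

theorem AsymptoticallyIntersecting.of_tailSaturation
    (hT : Measure.QuasiMeasurePreserving T ν ν) {A : Set X}
    (h : AsymptoticallyIntersecting ν T (tailSaturation T A)) :
    AsymptoticallyIntersecting ν T A := by
  obtain ⟨n, hn⟩ := h
  have hsat : 0 < ν (tailSaturation T (T^[n + 1] '' A) ∩ tailSaturation T (T^[n] '' A)) :=
    hn.trans_le <| measure_mono <| inter_subset_inter
      (image_iterate_tailSaturation_subset T A (n + 1)) (image_iterate_tailSaturation_subset T A n)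
  obtain ⟨m, hm⟩ := exists_measure_image_inter_pos_of_tailSaturation hT hsat
  rw [image_iterate_image_iterate, image_iterate_image_iterate] at hm
  exact ⟨m + n, hm⟩

theorem asymptotically_intersecting_of_tail_asymptotically_intersecting_general
    (hT : Measure.QuasiMeasurePreserving T ν ν)
    (hai : ∀ A : Set X, IsTailSet T A → 0 < ν A → AsymptoticallyIntersecting ν T A)
    {A : Set X} (hA : ∀ n : ℕ, MeasurableSet (T^[n] '' A)) (hpos : 0 < ν A) :
    AsymptoticallyIntersecting ν T A :=
  .of_tailSaturation hT <| hai _ (isTailSet_tailSaturation hT.measurable hA) <|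
    hpos.trans_le <| measure_mono <| subset_tailSaturation T A

end AsymptoticallyIntersecting

/-- if every tail set of positive measure is asymptotically intersecting,
then so is every measurable set of positive measure. -/
theorem asymptotically_intersecting_of_tail_asymptotically_intersecting
    {X : Type*} [MeasurableSpace X] (ν : Measure X) [SigmaFinite ν] (T : X → X)
    (hTmeas : Measurable T)
    (hTimg : ∀ A : Set X, MeasurableSet A → MeasurableSet (T '' A))
    (hTsurj : Function.Surjective T)
    (hns : ∀ A : Set X, MeasurableSet A → ν A = 0 → ν (T ⁻¹' A) = 0)
    (hai : ∀ A : Set X, IsTailSet T A → 0 < ν A →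
      ∃ n : ℕ, 0 < ν (T^[n + 1] '' A ∩ T^[n] '' A)) :
    ∀ A : Set X, MeasurableSet A → 0 < ν A →
      ∃ n : ℕ, 0 < ν (T^[n + 1] '' A ∩ T^[n] '' A) := by
  have hT : Measure.QuasiMeasurePreserving T ν ν :=
    ⟨hTmeas, .mk fun s hs h ↦ by rw [Measure.map_apply hTmeas hs, hns s hs h]⟩
  exact fun A hA ↦ asymptotically_intersecting_of_tail_asymptotically_intersecting_general hT hai
    (measurableSet_image_iterate hTimg hA)
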